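/- Let G=(V,E) be a graph and let θ:ℤ₂→Aut(G) act freely on V. Let τ:ℤ₂→O(3) send the non-trivial element to the reflection of ℝ³ in a plane through the origin, and let τ':ℤ₂→O(3) send the non-trivial element to −I₃ (the point inversion). Then G can be realised as an infinitesimally rigid (respectively, forced ℤ₂-symmetric infinitesimally rigid) ℤ₂-symmetric bar-joint framework in ℝ³ with respect to θ and τ if and only if G can be realised as an infinitesimally rigid (respectively, forced ℤ₂-symmetric infinitesimally rigid) ℤ₂-symmetric bar-joint framework in ℝ³ with respect to θ and τ'. -/

import Mathlib

/-!
Write `H` for the mirror plane `ν⊥`. The projective involution `φ` of `ℝ³` that exchanges the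
homogeneous coordinate along `ν` with the last one, `(x, y, z) ↦ (1, y, z) / x` for `ν = e₁`, is
defined off `H` and conjugates the reflection `x ↦ -x` into the point inversion.
In homogeneous coordinates `P = (p, 1)`, a velocity `u` becomes `q = (u, -⟨p,u⟩)`, the bar
condition becomes `⟨P_i, q_j⟩ + ⟨P_j, q_i⟩ = 0`, and trivial motions become `q = M P` with `M`
skew-symmetric of size `4`. All of this is preserved by orthogonal maps of `ℝ⁴` and by rescaling
`(P_i, q_i)`, so `φ` transports motions, trivial motions and equivariant motions
(`projMotion`, `projTrivial`, `projVel_symm` and the lemmas after it), and hence both notions of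
rigidity (`transfer`).

It remains to move all joints off `H` (`exists_off_plane`). Since `σ` is free there is a function
`c : V → {±1}` with `c ∘ σ = -c`, and `w = c ν` is equivariant for the reflection and for the
inversion alike. For all small `s ≠ 0` the configuration `p + s w` avoids `H`, and it is still
rigid (`forced_perturb`): the rank of the rigidity operator and the dimension of the space of
trivial motions are both lower semicontinuous, so no assumption on the affine span of `p` is
needed.

Unforced rigidity is treated as the forced rigidity for the trivial symmetry `σ = 1`, `A = 1`.
-/


open Matrix

namespace RigidityPaper

variable {V : Type*}

/-! ### Spherical frameworks on `S^{n-1} ⊆ ℝ^n` -/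

/-- A spherical framework: all points on the unit sphere, linearly spanning the ambient space. -/
def IsSphFw {n : ℕ} (p : V → Fin n → ℝ) : Prop :=
  (∀ i, p i ⬝ᵥ p i = 1) ∧ Submodule.span ℝ (Set.range p) = ⊤

/-- An infinitesimal motion of a spherical framework. -/
def SphMotion {n : ℕ} (G : SimpleGraph V) (p q : V → Fin n → ℝ) : Prop :=
  (∀ i j, G.Adj i j → p i ⬝ᵥ q j + p j ⬝ᵥ q i = 0) ∧ ∀ i, p i ⬝ᵥ q i = 0

/-- A trivial infinitesimal motion of a spherical framework. -/
def SphTrivial {n : ℕ} (p q : V → Fin n → ℝ) : Prop :=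
  ∃ S : Matrix (Fin n) (Fin n) ℝ, Sᵀ = -S ∧ ∀ i, q i = S *ᵥ p i

/-- Infinitesimal rigidity of a spherical framework. -/
def SphRigid {n : ℕ} (G : SimpleGraph V) (p : V → Fin n → ℝ) : Prop :=
  ∀ q, SphMotion G p q → SphTrivial p q

/-- Forced symmetric infinitesimal rigidity of a spherical framework, where `sym` is
the symmetry (equivariance) condition on infinitesimal motions. -/
def SphForcedRigid {n : ℕ} (G : SimpleGraph V) (sym : (V → Fin n → ℝ) → Prop)
    (p : V → Fin n → ℝ) : Prop :=
  ∀ q, SphMotion G p q → sym q → SphTrivial p q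

/-- The set of infinitesimal motions of a spherical framework, i.e. the kernel of the
spherical rigidity matrix. -/
def SphMotionSet {n : ℕ} (G : SimpleGraph V) (p : V → Fin n → ℝ) :
    Set (V → Fin n → ℝ) := {q | SphMotion G p q}

/-! ### Bar-joint frameworks in `ℝ^d` -/

/-- An infinitesimal motion of a bar-joint framework. -/
def BJMotion {d : ℕ} (G : SimpleGraph V) (p u : V → Fin d → ℝ) : Prop :=
  ∀ i j, G.Adj i j → (p i - p j) ⬝ᵥ (u i - u j) = 0

/-- A trivial infinitesimal motion of a bar-joint framework. -/
def BJTrivial {d : ℕ} (p u : V → Fin d → ℝ) : Prop :=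
  ∃ (S : Matrix (Fin d) (Fin d) ℝ) (t : Fin d → ℝ), Sᵀ = -S ∧ ∀ i, u i = S *ᵥ p i + t

/-- Infinitesimal rigidity of a bar-joint framework. -/
def BJRigid {d : ℕ} (G : SimpleGraph V) (p : V → Fin d → ℝ) : Prop :=
  ∀ u, BJMotion G p u → BJTrivial p u

/-- Forced symmetric infinitesimal rigidity of a bar-joint framework. -/
def BJForcedRigid {d : ℕ} (G : SimpleGraph V) (sym : (V → Fin d → ℝ) → Prop)
    (p : V → Fin d → ℝ) : Prop :=
  ∀ u, BJMotion G p u → sym u → BJTrivial p u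

/-- The set of infinitesimal motions of a bar-joint framework, i.e. the kernel of the
rigidity matrix. -/
def BJMotionSet {d : ℕ} (G : SimpleGraph V) (p : V → Fin d → ℝ) :
    Set (V → Fin d → ℝ) := {u | BJMotion G p u}

/-! ### Symmetry -/

/-- `p` is equivariant with respect to the vertex permutation `σ` and the matrix `A`. -/
def MatEquiv {n : ℕ} (σ : Equiv.Perm V) (A : Matrix (Fin n) (Fin n) ℝ)
    (p : V → Fin n → ℝ) : Prop :=
  ∀ i, A *ᵥ p i = p (σ i)

/-- `σ` is an automorphism of the graph `G`. -/
def IsGraphAut (G : SimpleGraph V) (σ : Equiv.Perm V) : Prop :=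
  ∀ i j, G.Adj (σ i) (σ j) ↔ G.Adj i j

/-- The augmented matrix `diag(A, 1)` of size `(d+1) × (d+1)`. -/
def aug {d : ℕ} (A : Matrix (Fin d) (Fin d) ℝ) :
    Matrix (Fin (d + 1)) (Fin (d + 1)) ℝ :=
  Matrix.of fun i j =>
    if h : (i : ℕ) < d then
      (if h' : (j : ℕ) < d then A ⟨i.1, h⟩ ⟨j.1, h'⟩ else 0)
    else (if (j : ℕ) < d then 0 else 1)

/-- Extend a vector of `ℝ^d` to `ℝ^{d+1}` by appending a last coordinate. -/
def extVec {d : ℕ} (x : Fin d → ℝ) (t : ℝ) : Fin (d + 1) → ℝ := Fin.snoc x t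

/-- A point of `S^d ⊆ ℝ^{d+1}` lies on the equator: its last coordinate vanishes. -/
def OnEquator {d : ℕ} (x : Fin (d + 1) → ℝ) : Prop := x (Fin.last d) = 0

/-- `A` is the reflection in the linear hyperplane with unit normal `ν`. -/
def IsReflection {d : ℕ} (A : Matrix (Fin d) (Fin d) ℝ) (ν : Fin d → ℝ) : Prop :=
  ν ⬝ᵥ ν = 1 ∧ ∀ x, A *ᵥ x = x - (2 * (ν ⬝ᵥ x)) • ν

/-- `A` is the rotation of `ℝ³` by `π` about the line through the origin with unit
direction `u`. -/
def IsHalfTurn3 (A : Matrix (Fin 3) (Fin 3) ℝ) (u : Fin 3 → ℝ) : Prop :=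
  u ⬝ᵥ u = 1 ∧ ∀ x, A *ᵥ x = (2 * (u ⬝ᵥ x)) • u - x

/-! ### Point-hyperplane frameworks in `ℝ^d`

A point-hyperplane framework on a PH-graph with hyperplane vertex set `VH` is given by
`p` (points, relevant on `VHᶜ`), `a` (unit normals of hyperplanes, relevant on `VH`) and
`r` (offsets of hyperplanes, relevant on `VH`); vertex `j ∈ VH` represents the hyperplane
`{x | a j ⬝ᵥ x + r j = 0}`. -/

/-- Point-hyperplane framework: unit normals, and the points together with the
hyperplanes affinely span `ℝ^d`. -/
def IsPHFw {d : ℕ} (VH : Set V) (p a : V → Fin d → ℝ) (r : V → ℝ) : Prop :=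
  (∀ j ∈ VH, a j ⬝ᵥ a j = 1) ∧
  affineSpan ℝ ((p '' VHᶜ) ∪ ⋃ j ∈ VH, {x | a j ⬝ᵥ x + r j = 0}) = ⊤

/-- An infinitesimal motion `(p', a', r')` of the point-hyperplane framework
`(G, VH, p, a, r)`. -/
def PHMotion {d : ℕ} (G : SimpleGraph V) (VH : Set V) (p a : V → Fin d → ℝ)
    (r : V → ℝ) (p' a' : V → Fin d → ℝ) (r' : V → ℝ) : Prop :=
  (∀ i j, G.Adj i j → i ∉ VH → j ∉ VH → (p i - p j) ⬝ᵥ (p' i - p' j) = 0) ∧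
  (∀ i j, G.Adj i j → i ∉ VH → j ∈ VH → p i ⬝ᵥ a' j + p' i ⬝ᵥ a j + r' j = 0) ∧
  (∀ i j, G.Adj i j → i ∈ VH → j ∈ VH → a i ⬝ᵥ a' j + a' i ⬝ᵥ a j = 0) ∧
  (∀ i ∈ VH, a i ⬝ᵥ a' i = 0)

/-- The space of infinitesimal motions of a point-hyperplane framework (the components
that do not correspond to unknowns of the rigidity matrix are normalised to zero). -/
def PHMotionSet {d : ℕ} (G : SimpleGraph V) (VH : Set V) (p a : V → Fin d → ℝ)
    (r : V → ℝ) : Set ((V → Fin d → ℝ) × (V → Fin d → ℝ) × (V → ℝ)) :=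
  {m | PHMotion G VH p a r m.1 m.2.1 m.2.2 ∧ (∀ i ∈ VH, m.1 i = 0) ∧
    ∀ i, i ∉ VH → m.2.1 i = 0 ∧ m.2.2 i = 0}

/-- The dimension of (the span of) a subset of a real vector space; for a linear
subspace this is just its dimension. -/
noncomputable def setDim {W : Type*} [AddCommGroup W] [Module ℝ W] (s : Set W) : ℕ :=
  Module.finrank ℝ (Submodule.span ℝ s)

/-- Infinitesimal rigidity of a point-hyperplane framework in `ℝ^d`: the space of
infinitesimal motions has dimension `(d+1).choose 2`. -/
def PHRigid {d : ℕ} (G : SimpleGraph V) (VH : Set V) (p a : V → Fin d → ℝ)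
    (r : V → ℝ) : Prop :=
  setDim (PHMotionSet G VH p a r) = Nat.choose (d + 1) 2

/-- A trivial infinitesimal motion of a point-hyperplane framework: one that extends to
(i.e. is) an infinitesimal motion of the framework on the complete PH-graph on the same
points and hyperplanes. -/
def PHTrivial {d : ℕ} (VH : Set V) (p a : V → Fin d → ℝ) (r : V → ℝ)
    (p' a' : V → Fin d → ℝ) (r' : V → ℝ) : Prop :=
  PHMotion (⊤ : SimpleGraph V) VH p a r p' a' r'

/-- Forced symmetric infinitesimal rigidity of a point-hyperplane framework. -/
def PHForcedRigid {d : ℕ} (G : SimpleGraph V) (VH : Set V) (p a : V → Fin d → ℝ)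
    (r : V → ℝ)
    (sym : (V → Fin d → ℝ) → (V → Fin d → ℝ) → (V → ℝ) → Prop) : Prop :=
  ∀ p' a' r', PHMotion G VH p a r p' a' r' → sym p' a' r' →
    PHTrivial VH p a r p' a' r'

/-- Equivariance of a point-hyperplane configuration with respect to a vertex
permutation `σ` and a matrix `A` (normals equivariant up to sign, offsets invariant). -/
def PHEquiv {d : ℕ} (σ : Equiv.Perm V) (A : Matrix (Fin d) (Fin d) ℝ) (VH : Set V)
    (p a : V → Fin d → ℝ) (r : V → ℝ) : Prop :=
  (∀ i, i ∉ VH → A *ᵥ p i = p (σ i)) ∧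
  (∀ j ∈ VH, A *ᵥ a j = a (σ j) ∨ A *ᵥ a j = -a (σ j)) ∧
  ∀ j ∈ VH, r j = r (σ j)

/-- Equivariance of an infinitesimal motion of a point-hyperplane framework with
normals `a`, with respect to `σ` and `A` (the sign matching that of the normals). -/
def PHMotionEquiv {d : ℕ} (σ : Equiv.Perm V) (A : Matrix (Fin d) (Fin d) ℝ)
    (VH : Set V) (a : V → Fin d → ℝ)
    (p' a' : V → Fin d → ℝ) (r' : V → ℝ) : Prop :=
  (∀ i, i ∉ VH → A *ᵥ p' i = p' (σ i)) ∧
  (∀ j ∈ VH, (A *ᵥ a j = a (σ j) → A *ᵥ a' j = a' (σ j)) ∧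
    (A *ᵥ a j = -a (σ j) → A *ᵥ a' j = -a' (σ j))) ∧
  ∀ j ∈ VH, r' j = r' (σ j)

/-! ### Regularity: maximal rank of the rigidity matrix among symmetric realisations,
equivalently minimal dimension of the space of infinitesimal motions. -/

/-- A spherical realisation is regular with respect to the class of realisations cut
out by `sym` if its rigidity matrix has maximal rank there, equivalently its motion
space has minimal dimension. -/
def SphRegularWrt {n : ℕ} (G : SimpleGraph V) (sym : (V → Fin n → ℝ) → Prop)
    (p : V → Fin n → ℝ) : Prop :=
  IsSphFw p ∧ sym p ∧
  ∀ q : V → Fin n → ℝ, IsSphFw q → sym q →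
    setDim (SphMotionSet G p) ≤ setDim (SphMotionSet G q)

/-- Regularity of a bar-joint realisation with respect to the class `sym`. -/
def BJRegularWrt {d : ℕ} (G : SimpleGraph V) (sym : (V → Fin d → ℝ) → Prop)
    (p : V → Fin d → ℝ) : Prop :=
  sym p ∧ ∀ q : V → Fin d → ℝ, sym q →
    setDim (BJMotionSet G p) ≤ setDim (BJMotionSet G q)

/-- Regularity of a point-hyperplane realisation with respect to the class `sym`. -/
def PHRegularWrt {d : ℕ} (G : SimpleGraph V) (VH : Set V)
    (sym : (V → Fin d → ℝ) → (V → Fin d → ℝ) → (V → ℝ) → Prop)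
    (p a : V → Fin d → ℝ) (r : V → ℝ) : Prop :=
  IsPHFw VH p a r ∧ sym p a r ∧
  ∀ (q b : V → Fin d → ℝ) (s : V → ℝ), IsPHFw VH q b s → sym q b s →
    setDim (PHMotionSet G VH p a r) ≤ setDim (PHMotionSet G VH q b s)

/-! ### Isostatic frameworks -/

/-- An isostatic bar-joint framework: infinitesimally rigid, and deleting any edge
destroys infinitesimal rigidity. -/
def BJIsostatic {d : ℕ} (G : SimpleGraph V) (p : V → Fin d → ℝ) : Prop :=
  BJRigid G p ∧ ∀ e ∈ G.edgeSet, ¬ BJRigid (G.deleteEdges {e}) p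

/-- An isostatic point-hyperplane framework. -/
def PHIsostatic {d : ℕ} (G : SimpleGraph V) (VH : Set V) (p a : V → Fin d → ℝ)
    (r : V → ℝ) : Prop :=
  PHRigid G VH p a r ∧ ∀ e ∈ G.edgeSet, ¬ PHRigid (G.deleteEdges {e}) VH p a r

/-! ### Counts for Laman-type theorems -/

/-- `(2,3)`-tightness of a graph. -/
def TwoThreeTight (G : SimpleGraph V) : Prop :=
  G.edgeSet.ncard + 3 = 2 * Nat.card V ∧
  ∀ F ⊆ G.edgeSet, F.Nonempty →
    F.ncard + 3 ≤ 2 * {v : V | ∃ e ∈ F, v ∈ e}.ncard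

/-! ### Quotient `ℤ₂`-gain graphs

For a free involution `σ` of `G` with a transversal `V₀` of the vertex orbits, the
quotient `ℤ₂`-gain graph has vertex set `V₀` and, since `ℤ₂`-gains are involutive,
its edges may be recorded as pairs `(s(i,j), α)` with `i, j ∈ V₀` and `α ∈ ZMod 2`:
gain `0` for the orbit of an edge `{i, j}` of `G`, and gain `1` for the orbit of an
edge `{i, σ j}`. -/

/-- `e` is an edge of the quotient `ℤ₂`-gain graph of `(G, σ)` with transversal `V₀`. -/
def GainEdge (G : SimpleGraph V) (σ : Equiv.Perm V) (V₀ : Set V)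
    (e : Sym2 V × ZMod 2) : Prop :=
  ∃ i j, i ∈ V₀ ∧ j ∈ V₀ ∧ e.1 = s(i, j) ∧
    ((e.2 = 0 ∧ G.Adj i j) ∨ (e.2 = 1 ∧ G.Adj i (σ j)))

/-- The vertices spanned by a set of gain edges. -/
def vsupp (F : Set (Sym2 V × ZMod 2)) : Set V := {v | ∃ e ∈ F, v ∈ e.1}

/-- A closed walk in a set `F` of `ℤ₂`-gain edges: a nonempty list of steps, each step
`(u, v, α)` traversing the edge `(s(u,v), α) ∈ F`, consecutive steps chained, returning
to the start. -/
def IsClosedWalk (F : Set (Sym2 V × ZMod 2)) (w : List (V × V × ZMod 2)) : Prop :=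
  w ≠ [] ∧ (∀ st ∈ w, (s(st.1, st.2.1), st.2.2) ∈ F) ∧
  List.Chain' (fun st₁ st₂ => st₁.2.1 = st₂.1) w ∧
  w.getLast?.map (fun st => st.2.1) = w.head?.map (fun st => st.1)

/-- A set of `ℤ₂`-gain edges is balanced if every closed walk has trivial gain. -/
def GainBalanced (F : Set (Sym2 V × ZMod 2)) : Prop :=
  ∀ w, IsClosedWalk F w → (w.map fun st => st.2.2).sum = 0

/-- `(2,3,m)`-gain-sparsity of a set of `ℤ₂`-gain edges. -/
def GainSparse (m : ℕ) (Es : Set (Sym2 V × ZMod 2)) : Prop :=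
  (∀ F ⊆ Es, F.Nonempty → GainBalanced F →
    F.ncard + 3 ≤ 2 * (vsupp F).ncard) ∧
  ∀ F ⊆ Es, F.Nonempty → F.ncard + m ≤ 2 * (vsupp F).ncard

/-- The quotient `ℤ₂`-gain graph of `(G, σ)` (with transversal `V₀`) contains a
spanning `(2,3,m)`-gain-tight subgraph. -/
def HasSpanningGainTight (G : SimpleGraph V) (σ : Equiv.Perm V) (V₀ : Set V)
    (m : ℕ) : Prop :=
  ∃ H : Set (Sym2 V × ZMod 2), (∀ e ∈ H, GainEdge G σ V₀ e) ∧
    GainSparse m H ∧ H.ncard + m = 2 * V₀.ncard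

section

open scoped Topology

/-! ### Stability of rigidity under symmetric perturbation -/

lemma eventually_finrank_range_le {E F : Type*} [NormedAddCommGroup E] [NormedSpace ℝ E]
    [FiniteDimensional ℝ E] [NormedAddCommGroup F] [NormedSpace ℝ F] [FiniteDimensional ℝ F]
    (T : ℝ → E →ₗ[ℝ] F) (hT : ∀ x, Continuous fun s => T s x) :
    ∀ᶠ s in 𝓝 (0 : ℝ), Module.finrank ℝ (LinearMap.range (T 0)) ≤
      Module.finrank ℝ (LinearMap.range (T s)) := by
  have hc : Continuous fun s => LinearMap.toContinuousLinearMap (T s) :=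
    continuous_clm_apply.2 hT
  have ho := (isOpen_setOfPred_nat_le_rank (𝕜 := ℝ) (E := E) (F := F)
    (Module.finrank ℝ (LinearMap.range (T 0)))).preimage hc
  have hm := ho.mem_nhds (x := 0) (Module.finrank_eq_rank ℝ (LinearMap.range (T 0))).le
  filter_upwards [hm] with s hs
  have hs' : (Module.finrank ℝ (LinearMap.range (T 0)) : Cardinal) ≤
      Module.rank ℝ (LinearMap.range (T s)) := hs
  rw [← Module.finrank_eq_rank] at hs'
  exact_mod_cast hs'

/-- If `range (L 0) = ker (R 0)` and `R s ∘ L s = 0` for all `s`, then exactness persists for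
small `s`: both ranks are lower semicontinuous, while `rank (R s) + rank (L s)` is at most
`dim E`, a bound attained at `s = 0`. -/
lemma eventually_exact {E F H : Type*} [NormedAddCommGroup E] [NormedSpace ℝ E]
    [FiniteDimensional ℝ E] [NormedAddCommGroup F] [NormedSpace ℝ F] [FiniteDimensional ℝ F]
    [NormedAddCommGroup H] [NormedSpace ℝ H] [FiniteDimensional ℝ H]
    (R : ℝ → E →ₗ[ℝ] F) (L : ℝ → H →ₗ[ℝ] E)
    (hR : ∀ x, Continuous fun s => R s x) (hL : ∀ x, Continuous fun s => L s x)
    (hRL : ∀ s x, R s (L s x) = 0) (h0 : ∀ u, R 0 u = 0 → ∃ x, L 0 x = u) :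
    ∀ᶠ s in 𝓝 (0 : ℝ), ∀ u, R s u = 0 → ∃ x, L s x = u := by
  have e0 : LinearMap.ker (R 0) = LinearMap.range (L 0) := by
    ext u
    simp only [LinearMap.mem_ker, LinearMap.mem_range]
    exact ⟨h0 u, by rintro ⟨x, rfl⟩; exact hRL 0 x⟩
  have r0 := (R 0).finrank_range_add_finrank_ker
  rw [e0] at r0
  filter_upwards [eventually_finrank_range_le R hR, eventually_finrank_range_le L hL] with s h1 h2 u hu
  have rs := (R s).finrank_range_add_finrank_ker
  have hle : LinearMap.range (L s) ≤ LinearMap.ker (R s) := by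
    rintro _ ⟨x, rfl⟩
    exact hRL s x
  have := Submodule.eq_of_le_of_finrank_le hle (by omega)
  have hu' : u ∈ LinearMap.range (L s) := by rw [this]; exact hu
  exact hu'

lemma skew_dot {n : ℕ} {S : Matrix (Fin n) (Fin n) ℝ} (hS : Sᵀ = -S) (x y : Fin n → ℝ) :
    x ⬝ᵥ (S *ᵥ y) = -(y ⬝ᵥ (S *ᵥ x)) := by
  rw [dotProduct_mulVec, ← mulVec_transpose, hS, neg_mulVec, neg_dotProduct, dotProduct_comm]

/-- The rigidity operator at `p`, augmented by the equations that a velocity assignment be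
equivariant. Its kernel is the space of equivariant infinitesimal motions. -/
noncomputable def symRigidityMap (G : SimpleGraph V) (σ : Equiv.Perm V)
    (A : Matrix (Fin 3) (Fin 3) ℝ) (p : V → Fin 3 → ℝ) :
    (V → Fin 3 → ℝ) →ₗ[ℝ] (V × V → ℝ) × (V → Fin 3 → ℝ) := by
  classical exact
  { toFun := fun u => (fun e => if G.Adj e.1 e.2 then
        (p e.1 - p e.2) ⬝ᵥ (u e.1 - u e.2) else 0, fun i => A *ᵥ u i - u (σ i))
    map_add' := by
      intro u v
      ext e
      · by_cases h : G.Adj e.1 e.2 <;> simp [h, dotProduct_add, dotProduct_sub]; ring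
      · simp [mulVec_add]; ring
    map_smul' := by
      intro c u
      ext e
      · by_cases h : G.Adj e.1 e.2 <;> simp [h, dotProduct_sub]; ring
      · simp [mulVec_smul]; ring }

lemma symRigidityMap_eq_zero (G : SimpleGraph V) (σ : Equiv.Perm V)
    (A : Matrix (Fin 3) (Fin 3) ℝ) (p u : V → Fin 3 → ℝ) :
    symRigidityMap G σ A p u = 0 ↔ BJMotion G p u ∧ MatEquiv σ A u := by
  simp [symRigidityMap, Prod.ext_iff, funext_iff, BJMotion, MatEquiv, sub_eq_zero]

/-- The parametrisation `(B, t) ↦ (i ↦ S (p i) + t')` of the equivariant trivial motions, where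
`S = (B - Bᵀ) + A (B - Bᵀ) A` and `t' = t + A t` are the symmetrisations. -/
noncomputable def symTrivialMap (A : Matrix (Fin 3) (Fin 3) ℝ) (p : V → Fin 3 → ℝ) :
    (Fin 3 → Fin 3 → ℝ) × (Fin 3 → ℝ) →ₗ[ℝ] (V → Fin 3 → ℝ) where
  toFun x i := ((Matrix.of x.1 - (Matrix.of x.1)ᵀ) +
    A * (Matrix.of x.1 - (Matrix.of x.1)ᵀ) * A) *ᵥ p i + (x.2 + A *ᵥ x.2)
  map_add' x y := by
    funext i
    have : Matrix.of (x + y).1 = Matrix.of x.1 + Matrix.of y.1 := rfl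
    rw [this]
    simp only [Matrix.transpose_add, Matrix.mul_add, Matrix.add_mul, add_mulVec, mulVec_add,
      sub_mulVec, Matrix.mul_sub, Matrix.sub_mul, Prod.snd_add, Pi.add_apply]
    abel
  map_smul' c x := by
    funext i
    have : Matrix.of (c • x).1 = c • Matrix.of x.1 := rfl
    rw [this]
    simp only [Matrix.transpose_smul, Matrix.mul_smul, Matrix.smul_mul, add_mulVec, mulVec_smul,
      sub_mulVec, Matrix.mul_sub, Matrix.sub_mul, Prod.smul_snd, Pi.smul_apply, smul_mulVec,
      smul_add, smul_sub, RingHom.id_apply]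

/-- Forced symmetric rigidity at a symmetric configuration survives small symmetric
perturbations, whether or not the configuration affinely spans the space. Taking `σ = 1` and
`A = 1` gives the same for unforced rigidity. -/
lemma forced_perturb [Fintype V] (G : SimpleGraph V) (σ : Equiv.Perm V)
    (A : Matrix (Fin 3) (Fin 3) ℝ) (hA2 : A * A = 1) (hAT : Aᵀ = A)
    (p w : V → Fin 3 → ℝ) (hp : MatEquiv σ A p) (hw : MatEquiv σ A w)
    (h : BJForcedRigid G (MatEquiv σ A) p) :
    ∀ᶠ s in 𝓝 (0 : ℝ), BJForcedRigid G (MatEquiv σ A) (p + s • w) := by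
  have hps : ∀ s : ℝ, MatEquiv σ A (p + s • w) := fun s i => by
    simp [mulVec_add, mulVec_smul, hp i, hw i]
  have skew : ∀ B : Matrix (Fin 3) (Fin 3) ℝ,
      ((B - Bᵀ) + A * (B - Bᵀ) * A)ᵀ = -((B - Bᵀ) + A * (B - Bᵀ) * A) := by
    intro B
    simp only [transpose_add, transpose_sub, transpose_mul, transpose_transpose, hAT,
      Matrix.mul_sub, Matrix.sub_mul, Matrix.mul_assoc]
    abel
  have hAA : ∀ x, A *ᵥ (A *ᵥ x) = x := fun x => by rw [mulVec_mulVec, hA2, one_mulVec]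
  have main := eventually_exact (fun s : ℝ => symRigidityMap G σ A (p + s • w))
    (fun s : ℝ => symTrivialMap A (p + s • w)) ?_ ?_ ?_ ?_
  · filter_upwards [main] with s hs u hu hsym
    obtain ⟨x, hx⟩ := hs u ((symRigidityMap_eq_zero _ _ _ _ _).2 ⟨hu, hsym⟩)
    exact ⟨_, _, skew (Matrix.of x.1), fun i => (congrFun hx i).symm⟩
  · intro u
    simp only [symRigidityMap, LinearMap.coe_mk, AddHom.coe_mk]
    refine Continuous.prodMk (continuous_pi fun e => ?_) continuous_const
    split_ifs
    · simp only [dotProduct, Pi.add_apply, Pi.smul_apply, Pi.sub_apply]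
      fun_prop
    · exact continuous_const
  · intro x
    simp only [symTrivialMap, LinearMap.coe_mk, AddHom.coe_mk]
    refine continuous_pi fun i => ?_
    refine Continuous.add ?_ continuous_const
    simp only [Pi.add_apply, Pi.smul_apply, mulVec_add, mulVec_smul]
    fun_prop
  · intro s x
    refine (symRigidityMap_eq_zero _ _ _ _ _).2 ⟨fun i j _ => ?_, fun i => ?_⟩
    · simp only [symTrivialMap, LinearMap.coe_mk, AddHom.coe_mk]
      rw [add_sub_add_right_eq_sub, ← mulVec_sub]
      have := skew_dot (skew (Matrix.of x.1)) ((p + s • w) i - (p + s • w) j)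
        ((p + s • w) i - (p + s • w) j)
      linarith
    · simp only [symTrivialMap, LinearMap.coe_mk, AddHom.coe_mk]
      rw [← hps s i]
      simp only [mulVec_add, add_mulVec, ← mulVec_mulVec, hAA]
      abel
  · intro u hu
    simp only [zero_smul, add_zero] at hu ⊢
    obtain ⟨hu, hsym⟩ := (symRigidityMap_eq_zero _ _ _ _ _).1 hu
    obtain ⟨S, t, hS, hut⟩ := h u hu hsym
    -- `u = S p + t` is the average of itself and its transform `A S A p + A t`.
    refine ⟨((1 / 4 : ℝ) • S, (1 / 2 : ℝ) • t), funext fun i => ?_⟩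
    have e : Matrix.of ((1 / 4 : ℝ) • S) - (Matrix.of ((1 / 4 : ℝ) • S))ᵀ = (1 / 2 : ℝ) • S := by
      change (1 / 4 : ℝ) • S - ((1 / 4 : ℝ) • S)ᵀ = _
      rw [transpose_smul, hS]
      module
    have h1 : u i = A *ᵥ (S *ᵥ (A *ᵥ p i)) + A *ᵥ t := by
      rw [← hAA (u i), hsym i, hut (σ i), hp i, mulVec_add]
    have h2 : u i = (1 / 2 : ℝ) • u i + (1 / 2 : ℝ) • u i := by module
    rw [h2]
    nth_rewrite 1 [hut i]
    rw [h1]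
    simp only [symTrivialMap, LinearMap.coe_mk, AddHom.coe_mk]
    rw [e]
    simp only [add_mulVec, Matrix.mul_smul, Matrix.smul_mul, smul_mulVec, mulVec_smul,
      ← mulVec_mulVec]
    module

lemma rigid_iff_forced (G : SimpleGraph V) (p : V → Fin 3 → ℝ) :
    BJRigid G p ↔ BJForcedRigid G (MatEquiv 1 1) p :=
  ⟨fun h u hu _ => h u hu, fun h u hu => h u hu fun i => by simp⟩

/-! ### The projective involution -/

/-- The projective involution `x ↦ (x - ⟨ν,x⟩ν + ν) / ⟨ν,x⟩` of `ℝ³` applied to a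
configuration. In coordinates with `ν = e₁` it is `(x, y, z) ↦ (1, y, z) / x`. -/
noncomputable def projConf (ν : Fin 3 → ℝ) (p : V → Fin 3 → ℝ) : V → Fin 3 → ℝ :=
  fun i => (ν ⬝ᵥ p i)⁻¹ • (p i + (1 - ν ⬝ᵥ p i) • ν)

/-- The transport of velocities from `p` to `projConf ν p`. In homogeneous coordinates
a velocity `u` at `p` is the vector `(u, -⟨p,u⟩)`, orthogonal to `(p, 1)`; the transport is the
exchange of the `ν` and the last coordinate, followed by division by `⟨ν,p⟩`. -/
noncomputable def projVel (ν : Fin 3 → ℝ) (p u : V → Fin 3 → ℝ) : V → Fin 3 → ℝ :=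
  fun i => (ν ⬝ᵥ p i)⁻¹ • (u i - (ν ⬝ᵥ u i + p i ⬝ᵥ u i) • ν)

lemma nu_projConf {ν : Fin 3 → ℝ} (hν : ν ⬝ᵥ ν = 1) {p : V → Fin 3 → ℝ}
    (hx : ∀ i, ν ⬝ᵥ p i ≠ 0) (i : V) : ν ⬝ᵥ projConf ν p i = (ν ⬝ᵥ p i)⁻¹ := by
  simp only [projConf, dotProduct_smul, dotProduct_add, hν, smul_eq_mul]
  have := hx i
  field_simp
  ring

lemma projConf_projConf {ν : Fin 3 → ℝ} (hν : ν ⬝ᵥ ν = 1) {p : V → Fin 3 → ℝ}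
    (hx : ∀ i, ν ⬝ᵥ p i ≠ 0) : projConf ν (projConf ν p) = p := by
  funext i
  have := hx i
  rw [projConf, nu_projConf hν hx]
  simp only [projConf]
  match_scalars <;> field_simp
  ring

lemma projVel_projVel {ν : Fin 3 → ℝ} (hν : ν ⬝ᵥ ν = 1) {p : V → Fin 3 → ℝ}
    (hx : ∀ i, ν ⬝ᵥ p i ≠ 0) (u : V → Fin 3 → ℝ) :
    projVel ν (projConf ν p) (projVel ν p u) = u := by
  funext i
  have := hx i
  rw [projVel, nu_projConf hν hx]
  simp only [projConf, projVel, dotProduct_smul, smul_dotProduct, add_dotProduct,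
    dotProduct_sub, hν, smul_eq_mul, dotProduct_comm (p i) ν]
  match_scalars <;> field_simp
  ring

lemma projMotion {ν : Fin 3 → ℝ} (hν : ν ⬝ᵥ ν = 1) {p : V → Fin 3 → ℝ}
    (hx : ∀ i, ν ⬝ᵥ p i ≠ 0) {G : SimpleGraph V} {u : V → Fin 3 → ℝ}
    (h : BJMotion G p u) : BJMotion G (projConf ν p) (projVel ν p u) := by
  intro i j hij
  have h1 := h i j hij
  have hi := hx i
  have hj := hx j
  simp only [dotProduct_sub, sub_dotProduct] at h1
  simp only [projConf, projVel, dotProduct_smul, smul_dotProduct, add_dotProduct,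
    dotProduct_sub, sub_dotProduct, hν, smul_eq_mul, dotProduct_comm (p _) ν]
  field_simp
  linear_combination (ν ⬝ᵥ p i) * (ν ⬝ᵥ p j) * h1

/-- With `u = S p + t` written as the skew matrix `[[S, t], [-tᵀ, 0]]` in homogeneous coordinates,
the matrix and the vector below are the blocks obtained after exchanging the `ν` and the last
coordinate. -/
lemma projTrivial {ν : Fin 3 → ℝ} (hν : ν ⬝ᵥ ν = 1) {p : V → Fin 3 → ℝ}
    (hx : ∀ i, ν ⬝ᵥ p i ≠ 0) {u : V → Fin 3 → ℝ}
    (h : BJTrivial p u) : BJTrivial (projConf ν p) (projVel ν p u) := by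
  obtain ⟨S, t, hS, hu⟩ := h
  refine ⟨S + vecMulVec ν (S *ᵥ ν) - vecMulVec (S *ᵥ ν) ν + vecMulVec t ν - vecMulVec ν t,
    S *ᵥ ν - (ν ⬝ᵥ t) • ν, ?_, fun i => ?_⟩
  · simp only [transpose_add, transpose_sub, transpose_vecMulVec, hS]
    abel
  · have hi := hx i
    have h1 := skew_dot hS (p i) (p i)
    have h2 := skew_dot hS ν ν
    have h3 := skew_dot hS ν (p i)
    have h1' : p i ⬝ᵥ S *ᵥ p i = 0 := by linarith
    have h2' : ν ⬝ᵥ S *ᵥ ν = 0 := by linarith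
    simp only [projConf, projVel, hu, add_mulVec, sub_mulVec, vecMulVec_mulVec, mulVec_add,
      mulVec_smul, op_smul_eq_smul, dotProduct_add, hν,
      dotProduct_comm (S *ᵥ ν), dotProduct_comm t, h1', h2', h3]
    match_scalars <;> field_simp <;> ring

/-- Forced rigidity passes from `p` to its projective image, provided that the transport back to
`p` turns the symmetry condition at the image into the one at `p`. -/
lemma transfer {ν : Fin 3 → ℝ} (hν : ν ⬝ᵥ ν = 1) {p : V → Fin 3 → ℝ}
    (hx : ∀ i, ν ⬝ᵥ p i ≠ 0) {G : SimpleGraph V} {sym sym' : (V → Fin 3 → ℝ) → Prop}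
    (hs : ∀ u, sym' u → sym (projVel ν (projConf ν p) u))
    (h : BJForcedRigid G sym p) : BJForcedRigid G sym' (projConf ν p) := by
  intro u hu hsu
  have hx' : ∀ i, ν ⬝ᵥ projConf ν p i ≠ 0 := fun i => by
    rw [nu_projConf hν hx]; exact inv_ne_zero (hx i)
  have e := projConf_projConf hν hx
  have h1 := projMotion hν hx' hu
  rw [e] at h1
  have h2 := projTrivial hν hx (h _ h1 (hs u hsu))
  have h3 := projVel_projVel hν hx' u
  rw [e] at h3
  rwa [h3] at h2

lemma projConf_symm {σ : Equiv.Perm V} {A : Matrix (Fin 3) (Fin 3) ℝ} {ν : Fin 3 → ℝ}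
    (hA : IsReflection A ν) {p : V → Fin 3 → ℝ} (hp : MatEquiv σ A p) :
    MatEquiv σ (-1 : Matrix (Fin 3) (Fin 3) ℝ) (projConf ν p) := by
  intro i
  have e : ν ⬝ᵥ p (σ i) = -(ν ⬝ᵥ p i) := by
    rw [← hp i, hA.2, dotProduct_sub, dotProduct_smul, hA.1, smul_eq_mul]; ring
  simp only [projConf, e, neg_mulVec, one_mulVec, inv_neg]
  rw [← hp i, hA.2]
  module

lemma projConf_symm' {σ : Equiv.Perm V} {A : Matrix (Fin 3) (Fin 3) ℝ} {ν : Fin 3 → ℝ}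
    (hA : IsReflection A ν) {p : V → Fin 3 → ℝ} (hx : ∀ i, ν ⬝ᵥ p i ≠ 0)
    (hp : MatEquiv σ (-1 : Matrix (Fin 3) (Fin 3) ℝ) p) :
    MatEquiv σ A (projConf ν p) := by
  intro i
  have h : p (σ i) = -p i := by rw [← hp i, neg_mulVec, one_mulVec]
  have hi := hx i
  rw [hA.2, nu_projConf hA.1 hx]
  simp only [projConf, h, dotProduct_neg, inv_neg]
  match_scalars <;> field_simp
  ring

lemma projVel_symm {σ : Equiv.Perm V} {A : Matrix (Fin 3) (Fin 3) ℝ} {ν : Fin 3 → ℝ}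
    (hA : IsReflection A ν) {p u : V → Fin 3 → ℝ} (hp : MatEquiv σ A p) (hu : MatEquiv σ A u) :
    MatEquiv σ (-1 : Matrix (Fin 3) (Fin 3) ℝ) (projVel ν p u) := by
  intro i
  have e : ∀ q : V → Fin 3 → ℝ, MatEquiv σ A q → ν ⬝ᵥ q (σ i) = -(ν ⬝ᵥ q i) := fun q hq => by
    rw [← hq i, hA.2, dotProduct_sub, dotProduct_smul, hA.1, smul_eq_mul]; ring
  have e3 : p (σ i) ⬝ᵥ u (σ i) = p i ⬝ᵥ u i := by
    rw [← hp i, ← hu i, hA.2, hA.2]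
    simp only [dotProduct_sub, sub_dotProduct, dotProduct_smul, smul_dotProduct, hA.1,
      dotProduct_comm (p i) ν, smul_eq_mul]
    ring
  simp only [projVel, e p hp, e u hu, e3, neg_mulVec, one_mulVec, inv_neg]
  rw [← hu i, hA.2]
  module

lemma projVel_symm' {σ : Equiv.Perm V} {A : Matrix (Fin 3) (Fin 3) ℝ} {ν : Fin 3 → ℝ}
    (hA : IsReflection A ν) {p u : V → Fin 3 → ℝ} (hx : ∀ i, ν ⬝ᵥ p i ≠ 0)
    (hp : MatEquiv σ (-1 : Matrix (Fin 3) (Fin 3) ℝ) p)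
    (hu : MatEquiv σ (-1 : Matrix (Fin 3) (Fin 3) ℝ) u) :
    MatEquiv σ A (projVel ν p u) := by
  intro i
  have e1 : p (σ i) = -p i := by rw [← hp i, neg_mulVec, one_mulVec]
  have e2 : u (σ i) = -u i := by rw [← hu i, neg_mulVec, one_mulVec]
  have hi := hx i
  rw [hA.2]
  simp only [projVel, e1, e2, dotProduct_neg, neg_dotProduct, inv_neg, dotProduct_smul,
    dotProduct_sub, hA.1, smul_eq_mul]
  match_scalars <;> field_simp
  ring

/-! ### Moving the joints off the plane -/

lemma exists_odd_sign [Fintype V] (σ : Equiv.Perm V) (hσ2 : σ * σ = 1)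
    (hfree : ∀ i : V, σ i ≠ i) : ∃ c : V → ℝ, (∀ i, c i ≠ 0) ∧ ∀ i, c (σ i) = -c i := by
  classical
  let e := Fintype.equivFin V
  have hσ : ∀ i, σ (σ i) = i := fun i => by
    rw [← Equiv.Perm.mul_apply, hσ2, Equiv.Perm.one_apply]
  refine ⟨fun i => if e i < e (σ i) then 1 else -1, fun i => by dsimp only; split_ifs <;> norm_num,
    fun i => ?_⟩
  have hne : e (σ i) ≠ e i := fun h => hfree i (e.injective h)
  simp only [hσ]
  rcases lt_or_gt_of_ne hne with h | h
  · simp [h, h.not_gt]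
  · simp [h, h.not_gt]

/-- A rigid symmetric configuration can be moved off the plane `ν⊥`, keeping its symmetry under
`A` and its rigidity. The pair `(ρ, B)` is the symmetry imposed on the motions: `(σ, A)` for
forced rigidity and `(1, 1)` for rigidity. -/
lemma exists_off_plane [Fintype V] {G : SimpleGraph V} {σ ρ : Equiv.Perm V}
    (hσ2 : σ * σ = 1) (hfree : ∀ i : V, σ i ≠ i)
    {A B : Matrix (Fin 3) (Fin 3) ℝ} {ν : Fin 3 → ℝ} (hν : ν ⬝ᵥ ν = 1) (hAν : A *ᵥ ν = -ν)
    (hB2 : B * B = 1) (hBT : Bᵀ = B) (hAB : ∀ q : V → Fin 3 → ℝ, MatEquiv σ A q → MatEquiv ρ B q)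
    {p : V → Fin 3 → ℝ} (hp : MatEquiv σ A p) (h : BJForcedRigid G (MatEquiv ρ B) p) :
    ∃ q, MatEquiv σ A q ∧ (∀ i, ν ⬝ᵥ q i ≠ 0) ∧ BJForcedRigid G (MatEquiv ρ B) q := by
  obtain ⟨c, hc, hcσ⟩ := exists_odd_sign σ hσ2 hfree
  have hw : MatEquiv σ A (fun i => c i • ν) := fun i => by
    simp [mulVec_smul, hAν, hcσ]
  have h1 := (forced_perturb G ρ B hB2 hBT p _ (hAB _ hp) (hAB _ hw) h).filter_mono
    (nhdsWithin_le_nhds (s := {0}ᶜ))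
  have h2 : ∀ᶠ s in 𝓝[≠] (0 : ℝ), ∀ i, ν ⬝ᵥ (p + s • fun i => c i • ν) i ≠ 0 := by
    rw [Filter.eventually_all]
    intro i
    -- The only bad parameter is `s = -⟨ν, p i⟩ / c i`.
    have h3 : ∀ᶠ s in 𝓝[≠] (0 : ℝ), s ≠ -(ν ⬝ᵥ p i) / c i := by
      by_cases h0 : -(ν ⬝ᵥ p i) / c i = 0
      · rw [h0]; exact eventually_mem_nhdsWithin
      · exact (eventually_ne_nhds (Ne.symm h0)).filter_mono nhdsWithin_le_nhds
    filter_upwards [h3] with s hs h4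
    simp only [Pi.add_apply, Pi.smul_apply, dotProduct_add, dotProduct_smul, hν, smul_eq_mul] at h4
    exact hs (by rw [eq_div_iff (hc i)]; linarith)
  obtain ⟨s, hs1, hs2⟩ := (h1.and h2).exists
  refine ⟨_, fun i => ?_, hs2, hs1⟩
  simp only [Pi.add_apply, Pi.smul_apply, mulVec_add, mulVec_smul]
  rw [hp i, hAν, hcσ]
  module

end

/-- in `ℝ³`, realisability of `G` as an infinitesimally rigid (resp.
forced `ℤ₂`-symmetric infinitesimally rigid) `ℤ₂`-symmetric bar-joint framework with
mirror symmetry is equivalent to the same with inversion symmetry. -/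
theorem statement_17 {V : Type*} [Fintype V] (G : SimpleGraph V)
    (σ : Equiv.Perm V) (hσ2 : σ * σ = 1) (hσaut : IsGraphAut G σ)
    (hfree : ∀ i : V, σ i ≠ i)
    (A : Matrix (Fin 3) (Fin 3) ℝ) (ν : Fin 3 → ℝ) (hA : IsReflection A ν) :
    ((∃ p : V → Fin 3 → ℝ, MatEquiv σ A p ∧ BJRigid G p) ↔
      (∃ p : V → Fin 3 → ℝ, MatEquiv σ (-1 : Matrix (Fin 3) (Fin 3) ℝ) p ∧
        BJRigid G p)) ∧
    ((∃ p : V → Fin 3 → ℝ, MatEquiv σ A p ∧ BJForcedRigid G (MatEquiv σ A) p) ↔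
      (∃ p : V → Fin 3 → ℝ, MatEquiv σ (-1 : Matrix (Fin 3) (Fin 3) ℝ) p ∧
        BJForcedRigid G (MatEquiv σ (-1 : Matrix (Fin 3) (Fin 3) ℝ)) p)) := by
  have hν := hA.1
  have hAν : A *ᵥ ν = -ν := by rw [hA.2, hν]; module
  have hBν : (-1 : Matrix (Fin 3) (Fin 3) ℝ) *ᵥ ν = -ν := by rw [neg_mulVec, one_mulVec]
  have hA2 : A * A = 1 := by
    rw [ext_iff_mulVec]
    intro v
    rw [← mulVec_mulVec, one_mulVec, hA.2, hA.2, dotProduct_sub, dotProduct_smul, hν, smul_eq_mul]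
    module
  have hAT : Aᵀ = A := by
    have : A = 1 - (2 : ℝ) • vecMulVec ν ν := by
      rw [ext_iff_mulVec]
      intro v
      rw [hA.2, sub_mulVec, one_mulVec, smul_mulVec, vecMulVec_mulVec, op_smul_eq_smul, smul_smul]
    rw [this, transpose_sub, transpose_one, transpose_smul, transpose_vecMulVec]
  have hB2 : (-1 : Matrix (Fin 3) (Fin 3) ℝ) * -1 = 1 := by simp
  have hBT : (-1 : Matrix (Fin 3) (Fin 3) ℝ)ᵀ = -1 := by simp
  have hx' : ∀ {q : V → Fin 3 → ℝ}, (∀ i, ν ⬝ᵥ q i ≠ 0) → ∀ i, ν ⬝ᵥ projConf ν q i ≠ 0 :=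
    fun hq i => by rw [nu_projConf hν hq]; exact inv_ne_zero (hq i)
  have htriv : ∀ q : V → Fin 3 → ℝ, MatEquiv 1 1 q := fun q i => by simp
  simp only [rigid_iff_forced]
  refine ⟨⟨?_, ?_⟩, ⟨?_, ?_⟩⟩
  · rintro ⟨p, hp, h⟩
    obtain ⟨q, hq, hx, h⟩ := exists_off_plane hσ2 hfree hν hAν (one_mul 1) transpose_one
      (fun q _ => htriv q) hp h
    exact ⟨_, projConf_symm hA hq, transfer hν hx (fun u _ => htriv _) h⟩
  · rintro ⟨p, hp, h⟩
    obtain ⟨q, hq, hx, h⟩ := exists_off_plane hσ2 hfree hν hBν (one_mul 1) transpose_one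
      (fun q _ => htriv q) hp h
    exact ⟨_, projConf_symm' hA hx hq, transfer hν hx (fun u _ => htriv _) h⟩
  · rintro ⟨p, hp, h⟩
    obtain ⟨q, hq, hx, h⟩ := exists_off_plane hσ2 hfree hν hAν hA2 hAT (fun q hq => hq) hp h
    exact ⟨_, projConf_symm hA hq, transfer hν hx
      (fun u hu => projVel_symm' hA (hx' hx) (projConf_symm hA hq) hu) h⟩
  · rintro ⟨p, hp, h⟩
    obtain ⟨q, hq, hx, h⟩ := exists_off_plane hσ2 hfree hν hBν hB2 hBT (fun q hq => hq) hp h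
    exact ⟨_, projConf_symm' hA hx hq, transfer hν hx
      (fun u hu => projVel_symm hA (projConf_symm' hA hx hq) hu) h⟩

end RigidityPaper
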